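/- arXiv:1611.06454 — 2 statements merged into one kernel-verified Lean document; each statement's English description precedes it below -/
import Mathlib

section
/- The algebra 𝔷₃ degenerates to 𝔑₂(0): the structure λ with table e₁e₁ = e₃, e₁e₂ = e₄, e₂e₂ = −e₄ lies in the closure of the GL(V)-orbit of the structure μ with table e₁e₁ = e₃, e₁e₃ = e₄, e₂e₂ = e₄, e₃e₁ = 2e₄. -/
noncomputable section

/-- `V = ℂ⁴`. -/
abbrev V : Type := Fin 4 → ℂ

/-- The standard basis vectors `e₁, e₂, e₃, e₄` of `V` (indexed by `0, 1, 2, 3`). -/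
def e (i : Fin 4) : V := Pi.single i 1

/-- The `GL(V)`-orbit `O(μ)` of an algebra structure `μ` on `V`, for the action
`(g • μ)(x, y) = g (μ (g⁻¹ x) (g⁻¹ y))`. -/
def orbit (μ : V →L[ℂ] V →L[ℂ] V) : Set (V →L[ℂ] V →L[ℂ] V) :=
  {ν | ∃ g : V ≃L[ℂ] V, ∀ x y : V, ν x y = g (μ (g.symm x) (g.symm y))}

open Filter Topology

theorem V_expand (x : V) : x = x 0 • e 0 + x 1 • e 1 + x 2 • e 2 + x 3 • e 3 := by
  ext i; fin_cases i <;> simp [e]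

def hEquiv (t : ℂ) (ht : t ≠ 0) : V ≃ₗ[ℂ] V where
  toFun x := ![t * x 0, -2 * x 0 + x 1, t⁻¹ * x 1 + t ^ 2 * x 2, 4 * x 2 - x 3]
  invFun y := ![t⁻¹ * y 0, y 1 + 2 * (t⁻¹ * y 0),
    (t⁻¹) ^ 2 * (y 2 - t⁻¹ * (y 1 + 2 * (t⁻¹ * y 0))),
    4 * ((t⁻¹) ^ 2 * (y 2 - t⁻¹ * (y 1 + 2 * (t⁻¹ * y 0)))) - y 3]
  map_add' x y := by
    ext i; fin_cases i <;> simp <;> ring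
  map_smul' c x := by
    ext i; fin_cases i <;> simp <;> ring
  left_inv x := by
    ext i; fin_cases i <;> simp <;> field_simp <;> ring
  right_inv x := by
    ext i; fin_cases i <;> simp <;> field_simp <;> ring

theorem lim_gen {E : Type*} [NormedAddCommGroup E] [NormedSpace ℂ E] (a k : E) :
    Tendsto (fun t : ℂ => a + t ^ 3 • k) (𝓝[≠] 0) (𝓝 a) := by
  have hc : Continuous (fun t : ℂ => a + t ^ 3 • k) := by fun_prop
  have := hc.tendsto 0
  simp only [ne_eq, OfNat.ofNat_ne_zero, not_false_eq_true, zero_pow, zero_smul, add_zero] at this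
  exact this.mono_left nhdsWithin_le_nhds

def kap : V →L[ℂ] V →L[ℂ] V :=
  (ContinuousLinearMap.proj (R := ℂ) (φ := fun _ : Fin 4 => ℂ) 0).smulRight
    ((ContinuousLinearMap.proj (R := ℂ) (φ := fun _ : Fin 4 => ℂ) 2).smulRight (-e 3)) +
  (ContinuousLinearMap.proj (R := ℂ) (φ := fun _ : Fin 4 => ℂ) 2).smulRight
    ((ContinuousLinearMap.proj (R := ℂ) (φ := fun _ : Fin 4 => ℂ) 0).smulRight ((-2 : ℂ) • e 3))

theorem kap_apply (x y : V) : kap x y = ![0, 0, 0, -(x 0 * y 2) - 2 * (x 2 * y 0)] := by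
  ext i; fin_cases i <;> simp [kap, e] <;> ring

/-- 𝔷₃ degenerates to 𝔑₂(0). -/
theorem stmt8 (μ lam : V →L[ℂ] V →L[ℂ] V)
    (hμ : ∀ i j : Fin 4, μ (e i) (e j) =
    (![
      ![e 2, 0, e 3, 0],
      ![0, e 3, 0, 0],
      ![(2 : ℂ) • e 3, 0, 0, 0],
      ![0, 0, 0, 0]
     ] : Fin 4 → Fin 4 → V) i j)
    (hlam : ∀ i j : Fin 4, lam (e i) (e j) =
    (![
      ![e 2, e 3, 0, 0],
      ![0, -e 3, 0, 0],
      ![0, 0, 0, 0],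
      ![0, 0, 0, 0]
     ] : Fin 4 → Fin 4 → V) i j) :
    lam ∈ closure (orbit μ) := by
  have fμ : ∀ x y : V, μ x y = ![0, 0, x 0 * y 0, x 0 * y 2 + 2 * (x 2 * y 0) + x 1 * y 1] := by
    intro x y
    conv_lhs => rw [V_expand x, V_expand y]
    simp only [map_add, map_smul, add_apply, smul_apply, hμ]
    ext i; fin_cases i <;> simp [e] <;> ring
  have fl : ∀ x y : V, lam x y = ![0, 0, x 0 * y 0, x 0 * y 1 - x 1 * y 1] := by
    intro x y
    conv_lhs => rw [V_expand x, V_expand y]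
    simp only [map_add, map_smul, add_apply, smul_apply, hlam]
    ext i; fin_cases i <;> simp [e] <;> ring
  have lim : Tendsto (fun t : ℂ => lam + t ^ 3 • kap) (𝓝[≠] 0) (𝓝 lam) := by
    exact lim_gen lam kap
  refine mem_closure_of_tendsto lim ?_
  filter_upwards [self_mem_nhdsWithin] with t ht
  have ht : t ≠ 0 := ht
  refine ⟨(hEquiv t ht).symm.toContinuousLinearEquiv, fun x y => ?_⟩
  change _ = (hEquiv t ht).symm (μ (hEquiv t ht x) (hEquiv t ht y))
  rw [LinearEquiv.eq_symm_apply]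
  simp only [add_apply, smul_apply, fμ, fl, kap_apply]
  ext i; fin_cases i <;> simp [hEquiv] <;> field_simp <;> ring
end
end

section
/- The algebra 𝔑₂(1) degenerates to 𝔑₈: the structure λ with table e₂e₁ = e₄, e₂e₂ = e₃ lies in the closure of the GL(V)-orbit of the structure μ with table e₁e₁ = e₃, e₁e₂ = e₄, e₂e₁ = −e₃, e₂e₂ = −e₄. -/
noncomputable section

theorem expand_aux (ν : V →L[ℂ] V →L[ℂ] V) (x y : V) :
    ν x y = ∑ i, ∑ j, (x i * y j) • ν (e i) (e j) := by
  have hx : ∀ x : V, x = ∑ i, x i • e i := by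
    intro x
    ext k
    simp [e, Finset.sum_apply, Pi.single_apply]
  conv_lhs => rw [hx x, hx y]
  simp only [map_sum, map_smul, ContinuousLinearMap.sum_apply, ContinuousLinearMap.smul_apply,
    Finset.smul_sum, smul_smul]
  rw [Finset.sum_comm]
  refine Finset.sum_congr rfl fun i _ => Finset.sum_congr rfl fun j _ => ?_
  first
    | rfl
    | rw [mul_comm]

/-- The explicit change of basis. -/
def gAux : V ≃ₗ[ℂ] V where
  toFun x := ![x 1, x 0 - x 1, x 2 - x 3, x 3]
  invFun x := ![x 0 + x 1, x 0, x 2 + x 3, x 3]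
  map_add' x y := by
    ext k; fin_cases k <;> simp <;> ring
  map_smul' c x := by
    ext k; fin_cases k <;> simp <;> ring
  left_inv x := by
    ext k; fin_cases k <;> simp
  right_inv x := by
    ext k; fin_cases k <;> simp

theorem gAux_apply (x : V) : gAux x = ![x 1, x 0 - x 1, x 2 - x 3, x 3] := rfl

theorem gAux_symm_apply (x : V) : gAux.symm x = ![x 0 + x 1, x 0, x 2 + x 3, x 3] := rfl

/-- 𝔑₂(1) degenerates to 𝔑₈. -/
theorem stmt11 (μ lam : V →L[ℂ] V →L[ℂ] V)
    (hμ : ∀ i j : Fin 4, μ (e i) (e j) =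
    (![
      ![e 2, e 3, 0, 0],
      ![-e 2, -e 3, 0, 0],
      ![0, 0, 0, 0],
      ![0, 0, 0, 0]
     ] : Fin 4 → Fin 4 → V) i j)
    (hlam : ∀ i j : Fin 4, lam (e i) (e j) =
    (![
      ![0, 0, 0, 0],
      ![e 3, e 2, 0, 0],
      ![0, 0, 0, 0],
      ![0, 0, 0, 0]
     ] : Fin 4 → Fin 4 → V) i j) :
    lam ∈ closure (orbit μ) := by
  apply subset_closure
  refine ⟨gAux.toContinuousLinearEquiv, fun x y => ?_⟩
  change lam x y = gAux (μ (gAux.symm x) (gAux.symm y))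
  rw [expand_aux lam, expand_aux μ, gAux_apply]
  simp only [hμ, hlam, gAux_symm_apply]
  ext k
  fin_cases k <;> simp [Fin.sum_univ_four, e, Pi.single_apply] <;> ring
end
end
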